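/- (One-step coupling estimate for the TRMC scheme.) Under the same independence and optimal-coupling setup as for the Nanbu one-step estimate, but with the TRMC updates V_{n+1}^i = (1−τ_n^{i,1}) V_n^i + τ_n^{i,1}(1−τ_n^{i,2}) 𝒞(V_n^i, V_n^{j(α_n^i)}, θ_n^i) + τ_n^{i,1} τ_n^{i,2} M_n^i and W_{n+1}^i = (1−τ_n^{i,1}) W_n^i + τ_n^{i,1}(1−τ_n^{i,2}) 𝒞(W_n^i, W*_{f_n}(V_n, α_n^i), θ_n^i) + τ_n^{i,1} τ_n^{i,2} M_n^i, where both systems share the same random variables τ_n^{i,1}, τ_n^{i,2} ∼ Bernoulli(τ), α_n^i uniform on [0,N), θ_n^i ∼ b, and M_n^i ∼ f_∞, there exist constants C₁, C₂ > 0 depending only on L_𝒞 and M_∞(b) such that for each i, E|V_{n+1}^i − W_{n+1}^i| ≤ (1 + τ C₁) E|V_n^i − W_n^i| + τ(1−τ) C₂ E[W₁(f_n^N, f_n)], where f_n^N := (1/N)Σ_i δ_{V_n^i}. -/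

import Mathlib

open MeasureTheory ProbabilityTheory Set
open scoped ENNReal

noncomputable section

/-- `Vec d` is the Euclidean space `ℝ^d`. -/
abbrev Vec (d : ℕ) := EuclideanSpace ℝ (Fin d)

/-- Wasserstein-1 distance between two measures, defined as the infimum of
transport costs over all couplings. -/
noncomputable def W1 {E : Type*} [MeasurableSpace E] [NormedAddCommGroup E]
    (μ ν : Measure E) : ℝ :=
  sInf { c : ℝ | ∃ γ : Measure (E × E),
    γ.map Prod.fst = μ ∧ γ.map Prod.snd = ν ∧ c = ∫ p, ‖p.1 - p.2‖ ∂γ }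

/-- Gain part `Q⁺(f,g) = 𝒞_#(f ⊗ g ⊗ b)` of the collisional operator. -/
noncomputable def Qgain {E P : Type*} [MeasurableSpace E] [MeasurableSpace P]
    (𝒞 : E → E → P → E) (b : Measure P) (f g : Measure E) : Measure E :=
  ((f.prod g).prod b).map fun p => 𝒞 p.1.1 p.1.2 p.2

/-- `q`-th moment `M_q(μ) = ∫ ‖v‖^q dμ`. -/
noncomputable def momq {E : Type*} [MeasurableSpace E] [NormedAddCommGroup E]
    (q : ℝ) (μ : Measure E) : ℝ := ∫ v, ‖v‖ ^ q ∂μ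

/-- Bernoulli law `(1-p)δ₀ + pδ₁` on `ℝ`. -/
noncomputable def bern (p : ℝ) : Measure ℝ :=
  ENNReal.ofReal (1 - p) • Measure.dirac (0 : ℝ) + ENNReal.ofReal p • Measure.dirac 1

/-- Uniform distribution on `[0,N)`. -/
noncomputable def unifIco (N : ℕ) : Measure ℝ :=
  ((N : ℝ≥0∞))⁻¹ • volume.restrict (Set.Ico (0 : ℝ) (N : ℝ))

/-- Index `j(α) = ⌊α⌋ + 1` (in 0-based indexing, `⌊α⌋`) of the collision partner. -/
def jIdx (N : ℕ) [NeZero N] (α : ℝ) : Fin N :=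
  ⟨⌊α⌋.toNat % N, Nat.mod_lt _ (Nat.pos_of_ne_zero (NeZero.ne N))⟩

/-- Empirical measure of a particle configuration. -/
noncomputable def empMeas {E : Type*} [MeasurableSpace E] {N : ℕ} (v : Fin N → E) : Measure E :=
  ((N : ℝ≥0∞))⁻¹ • ∑ i, Measure.dirac (v i)

/-- Forward Euler iterates `f_{n+1} = (1-Δt) f_n + Δt Q⁺(f_n,f_n)`. -/
noncomputable def eulerSeq {E P : Type*} [MeasurableSpace E] [MeasurableSpace P]
    (𝒞 : E → E → P → E) (b : Measure P) (f₀ : Measure E) (Δt : ℝ) : ℕ → Measure E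
  | 0 => f₀
  | n + 1 =>
      ENNReal.ofReal (1 - Δt) • eulerSeq 𝒞 b f₀ Δt n +
        ENNReal.ofReal Δt • Qgain 𝒞 b (eulerSeq 𝒞 b f₀ Δt n) (eulerSeq 𝒞 b f₀ Δt n)

/-- Piecewise-linear-in-time interpolation of the forward Euler iterates. -/
noncomputable def eulerInterp {E P : Type*} [MeasurableSpace E] [MeasurableSpace P]
    (𝒞 : E → E → P → E) (b : Measure P) (f₀ : Measure E) (Δt : ℝ) (t : ℝ) : Measure E :=
  ENNReal.ofReal (1 - (t - ⌊t / Δt⌋.toNat * Δt) / Δt) • eulerSeq 𝒞 b f₀ Δt ⌊t / Δt⌋.toNat +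
    ENNReal.ofReal ((t - ⌊t / Δt⌋.toNat * Δt) / Δt) • eulerSeq 𝒞 b f₀ Δt (⌊t / Δt⌋.toNat + 1)

/-- Monte Carlo rate `ε(N)` from `fournier2015rate`. -/
noncomputable def epsRate (d N : ℕ) : ℝ :=
  if d = 1 then (N : ℝ) ^ (-(1/2 : ℝ))
  else if d = 2 then (N : ℝ) ^ (-(1/2 : ℝ)) * Real.log (1 + N)
  else (N : ℝ) ^ (-(1 / (d : ℝ)))

/-- Right-hand side of the weak formulation of the Boltzmann-type equation,
tested against `φ`. -/
noncomputable def collRHS {E P : Type*} [MeasurableSpace E] [MeasurableSpace P]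
    (𝒞 : E → E → P → E) (b : Measure P) (μ : Measure E) (φ : E → ℝ) : ℝ :=
  (1/2) * ∫ p, (φ (𝒞 p.1.1 p.1.2 p.2) + φ (𝒞 p.1.2 p.1.1 p.2) - φ p.1.1 - φ p.1.2)
    ∂((μ.prod μ).prod b)

/-- Weak measure solution of `∂ₜ f = Q(f,f)` on `[0,T]`, with values in `P₁(ℝ^d)`
(continuity in the Wasserstein-1 distance), in integrated-in-time form. -/
def IsWeakSol {d m : ℕ} (𝒞 : Vec d → Vec d → Vec m → Vec d) (b : Measure (Vec m))
    (T : ℝ) (f : ℝ → Measure (Vec d)) : Prop :=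
  (∀ t ∈ Set.Icc (0:ℝ) T, IsProbabilityMeasure (f t)) ∧
  (∀ t ∈ Set.Icc (0:ℝ) T, Integrable (fun v : Vec d => ‖v‖) (f t)) ∧
  (∀ t ∈ Set.Icc (0:ℝ) T, ∀ ε > (0:ℝ), ∃ δ > (0:ℝ),
     ∀ s ∈ Set.Icc (0:ℝ) T, |s - t| < δ → W1 (f s) (f t) < ε) ∧
  ∀ φ : Vec d → ℝ, ContDiff ℝ (⊤ : ℕ∞) φ → HasCompactSupport φ →
    ∀ t ∈ Set.Icc (0:ℝ) T,
      (∫ v, φ v ∂(f t)) - (∫ v, φ v ∂(f 0)) = ∫ s in (0:ℝ)..t, collRHS 𝒞 b (f s) φ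

/-!
The two systems share `τ¹, τ², α, θ, M`, so the thermalised velocity `M` cancels in the difference
of the updates: a particle keeps `V - W` with probability `1 - τ`, and sees the difference of the
two collisions with probability `τ (1 - τ)`. The Lipschitz bound on `𝒞` controls the latter by
`|V - W|` plus the distance between the two collision partners. Since the auxiliary variables are
independent of `(V, W)`, the partner distance may be averaged over `α` with `V` frozen, and the
optimality of the coupling turns this average into `W₁(f_n^N, f_n)`.
-/

section Bernoulli

variable {τ : ℝ}

lemma lintegral_bern (τ : ℝ) (f : ℝ → ℝ≥0∞) :
    ∫⁻ x, f x ∂bern τ = ENNReal.ofReal (1 - τ) * f 0 + ENNReal.ofReal τ * f 1 := by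
  simp [bern]

lemma ofReal_one_sub_add_ofReal (hτ : τ ∈ Icc 0 1) :
    ENNReal.ofReal (1 - τ) + ENNReal.ofReal τ = 1 := by
  rw [← ENNReal.ofReal_add (sub_nonneg.2 hτ.2) hτ.1, sub_add_cancel, ENNReal.ofReal_one]

lemma isProbabilityMeasure_bern (hτ : τ ∈ Icc 0 1) : IsProbabilityMeasure (bern τ) where
  measure_univ := by
    rw [← lintegral_one, lintegral_bern, mul_one, mul_one, ofReal_one_sub_add_ofReal hτ]

lemma lintegral_enorm_bern_mixture {X E : Type*} [MeasurableSpace X] {ρ : Measure X}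
    [IsProbabilityMeasure ρ] [NormedAddCommGroup E] [NormedSpace ℝ E] [MeasurableSpace E]
    [BorelSpace E] [SecondCountableTopology E] (hτ : τ ∈ Icc 0 1) (x : E) {D : X → E}
    (hD : Measurable D) :
    ∫⁻ u, ‖(1 - u.1) • x + (u.1 * (1 - u.2.1)) • D u.2.2‖ₑ ∂(bern τ).prod ((bern τ).prod ρ) =
      ENNReal.ofReal (1 - τ) * ‖x‖ₑ +
        ENNReal.ofReal τ * (ENNReal.ofReal (1 - τ) * ∫⁻ y, ‖D y‖ₑ ∂ρ) := by
  have := isProbabilityMeasure_bern hτ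
  rw [lintegral_prod _ (by fun_prop), lintegral_bern, lintegral_prod _ (by fun_prop),
    lintegral_prod _ (by fun_prop), lintegral_bern, lintegral_bern]
  simp [← add_mul, ofReal_one_sub_add_ofReal hτ]

end Bernoulli

section Partner

variable {N : ℕ} [NeZero N]

instance isProbabilityMeasure_unifIco : IsProbabilityMeasure (unifIco N) where
  measure_univ := by
    simp [unifIco, ENNReal.inv_mul_cancel (NeZero.ne (N : ℝ≥0∞)) (ENNReal.natCast_ne_top N)]

@[fun_prop]
lemma measurable_jIdx : Measurable (jIdx N) :=
  (measurable_of_countable fun k : ℤ => (⟨k.toNat % N, Nat.mod_lt _ (NeZero.pos N)⟩ : Fin N)).comp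
    Int.measurable_floor

lemma measurable_apply_index {X ι E : Type*} [MeasurableSpace X] [MeasurableSpace E] [Countable ι]
    [MeasurableSpace ι] [MeasurableSingletonClass ι] {f : X → ι → E} {j : X → ι}
    (hf : Measurable f) (hj : Measurable j) : Measurable fun x => f x (j x) :=
  (measurable_from_prod_countable_left (f := fun p : (ι → E) × ι => p.1 p.2)
    measurable_pi_apply).comp (hf.prodMk hj)

end Partner

section Wasserstein

variable {E : Type*} [MeasurableSpace E] [NormedAddCommGroup E]

lemma W1_nonneg (μ ν : Measure E) : 0 ≤ W1 μ ν := by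
  refine Real.sInf_nonneg ?_
  rintro _ ⟨γ, -, -, rfl⟩
  positivity

lemma W1_comm (μ ν : Measure E) : W1 μ ν = W1 ν μ := by
  suffices h : ∀ μ ν : Measure E,
      {c : ℝ | ∃ γ : Measure (E × E),
        γ.map Prod.fst = μ ∧ γ.map Prod.snd = ν ∧ c = ∫ p, ‖p.1 - p.2‖ ∂γ} ⊆
      {c : ℝ | ∃ γ : Measure (E × E),
        γ.map Prod.fst = ν ∧ γ.map Prod.snd = μ ∧ c = ∫ p, ‖p.1 - p.2‖ ∂γ} from
    congrArg sInf ((h μ ν).antisymm (h ν μ))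
  rintro μ ν _ ⟨γ, rfl, rfl, rfl⟩
  refine ⟨γ.map Prod.swap, Measure.map_map measurable_fst measurable_swap,
    Measure.map_map measurable_snd measurable_swap, ?_⟩
  calc ∫ p, ‖p.1 - p.2‖ ∂γ = ∫ p, ‖p.swap.1 - p.swap.2‖ ∂γ := by
        simp only [Prod.fst_swap, Prod.snd_swap, norm_sub_rev]
    _ = ∫ p, ‖p.1 - p.2‖ ∂γ.map Prod.swap :=
        (integral_map_equiv MeasurableEquiv.prodComm fun p : E × E => ‖p.1 - p.2‖).symm

/-- The map `w` produces optimal collision partners for the configuration `v`: for `α` uniform on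
`[0, N)`, the pair `(w α, v (jIdx N α))` is an optimal `W₁`-coupling between `f` and the empirical
measure of `v`. In the notation of the paper, `w = W*_f(v, ·)`. -/
def IsOptimalPartner {N : ℕ} [NeZero N] (f : Measure E) (v : Fin N → E) (w : ℝ → E) : Prop :=
  ((unifIco N).map fun α => (w α, v (jIdx N α))).map Prod.fst = f ∧
  ((unifIco N).map fun α => (w α, v (jIdx N α))).map Prod.snd = empMeas v ∧
  ∫ p, ‖p.1 - p.2‖ ∂(unifIco N).map (fun α => (w α, v (jIdx N α))) = W1 f (empMeas v)

lemma IsOptimalPartner.lintegral_enorm_sub [BorelSpace E] [SecondCountableTopology E] {N : ℕ}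
    [NeZero N] {f : Measure E} {v : Fin N → E} {w : ℝ → E} (hopt : IsOptimalPartner f v w)
    (hw : Measurable w) (hf : Integrable (fun x => ‖x‖) f) :
    ∫⁻ α, ‖v (jIdx N α) - w α‖ₑ ∂unifIco N = ENNReal.ofReal (W1 (empMeas v) f) := by
  obtain ⟨hfst, -, hcost⟩ := hopt
  have hv : Measurable fun α => v (jIdx N α) := (measurable_of_finite v).comp measurable_jIdx
  have hw_int : Integrable w (unifIco N) := by
    rw [← hfst, Measure.map_map measurable_fst (hw.prodMk hv)] at hf
    exact (integrable_norm_iff hw.aestronglyMeasurable).1 (hf.comp_measurable hw)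
  have hv_int : Integrable (fun α => v (jIdx N α)) (unifIco N) :=
    .of_bound hv.aestronglyMeasurable (∑ j, ‖v j‖) <| ae_of_all _ fun α =>
      Finset.single_le_sum (f := fun j => ‖v j‖) (fun _ _ => norm_nonneg _) (Finset.mem_univ _)
  rw [W1_comm, ← hcost, integral_map (hw.prodMk hv).aemeasurable (by fun_prop)]
  simp only [enorm_sub_rev _ (w _)]
  exact (ofReal_integral_norm_eq_lintegral_enorm (hw_int.sub hv_int)).symm

end Wasserstein

section Collision

lemma ae_lipschitz_of_ae_norm_le {E P : Type*} [SeminormedAddCommGroup E] [Norm P]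
    [MeasurableSpace P] {𝒞 : E → E → P → E}
    {b : Measure P} {L M : ℝ} (hL : 0 ≤ L) (hb : ∀ᵐ θ ∂b, ‖θ‖ ≤ M)
    (h𝒞 : ∀ v vs w ws θ, ‖𝒞 v vs θ - 𝒞 w ws θ‖ ≤ L * (1 + ‖θ‖) * (‖v - w‖ + ‖vs - ws‖)) :
    ∀ᵐ θ ∂b, ∀ v vs w ws, ‖𝒞 v vs θ - 𝒞 w ws θ‖ ≤ L * (1 + M) * (‖v - w‖ + ‖vs - ws‖) := by
  filter_upwards [hb] with θ hθ v vs w ws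
  exact (h𝒞 v vs w ws θ).trans (by gcongr)

variable {E P : Type*} [NormedAddCommGroup E] [MeasurableSpace P] {𝒞 : E → E → P → E}

lemma lintegral_enorm_collision_sub_le {X : Type*} [MeasurableSpace X] [MeasurableSpace E]
    [BorelSpace E] [SecondCountableTopology E] {ρ : Measure X} [SFinite ρ] {b : Measure P}
    [IsProbabilityMeasure b] {K : ℝ}
    (hLip : ∀ᵐ θ ∂b, ∀ v vs w ws, ‖𝒞 v vs θ - 𝒞 w ws θ‖ ≤ K * (‖v - w‖ + ‖vs - ws‖))
    (v w : E) {y z : X → E} (hy : Measurable y) (hz : Measurable z) :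
    ∫⁻ q, ‖𝒞 v (y q.1) q.2 - 𝒞 w (z q.1) q.2‖ₑ ∂ρ.prod b ≤
      ENNReal.ofReal K * ∫⁻ x, (‖v - w‖ₑ + ‖y x - z x‖ₑ) ∂ρ := by
  have hLip' : ∀ᵐ q ∂ρ.prod b, ‖𝒞 v (y q.1) q.2 - 𝒞 w (z q.1) q.2‖ₑ ≤
      ENNReal.ofReal K * (‖v - w‖ₑ + ‖y q.1 - z q.1‖ₑ) := by
    filter_upwards [Measure.quasiMeasurePreserving_snd.ae hLip] with q hq
    simp only [← ofReal_norm]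
    rw [← ENNReal.ofReal_add (norm_nonneg _) (norm_nonneg _), ← ENNReal.ofReal_mul' (by positivity)]
    exact ENNReal.ofReal_le_ofReal (hq _ _ _ _)
  calc ∫⁻ q, ‖𝒞 v (y q.1) q.2 - 𝒞 w (z q.1) q.2‖ₑ ∂ρ.prod b
      ≤ ∫⁻ q, ENNReal.ofReal K * (‖v - w‖ₑ + ‖y q.1 - z q.1‖ₑ) ∂ρ.prod b :=
        lintegral_mono_ae hLip'
    _ = ∫⁻ x, ENNReal.ofReal K * (‖v - w‖ₑ + ‖y x - z x‖ₑ) ∂ρ :=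
        measurePreserving_fst.lintegral_comp
          (f := fun x => ENNReal.ofReal K * (‖v - w‖ₑ + ‖y x - z x‖ₑ)) (by fun_prop)
    _ = ENNReal.ofReal K * ∫⁻ x, (‖v - w‖ₑ + ‖y x - z x‖ₑ) ∂ρ :=
        lintegral_const_mul _ (by fun_prop)

/-- The difference of the collision terms in the updates of `v i` (particle `i` of the
configuration `v`) and of the particle `w` coupled to it, as a function of the state
`z = (v, w)` and of `q = (α, θ)`; the two collision partners are `v (jIdx N α)` and
`Wstar (v, α)`. -/
def collisionGap {N : ℕ} [NeZero N] (𝒞 : E → E → P → E) (Wstar : (Fin N → E) × ℝ → E) (i : Fin N)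
    (z : (Fin N → E) × E) (q : ℝ × P) : E :=
  𝒞 (z.1 i) (z.1 (jIdx N q.1)) q.2 - 𝒞 z.2 (Wstar (z.1, q.1)) q.2

variable [MeasurableSpace E] [BorelSpace E] [SecondCountableTopology E] {N : ℕ} [NeZero N]
  {Wstar : (Fin N → E) × ℝ → E}

lemma measurable_collisionGap
    (h𝒞 : Measurable fun p : (E × E) × P => 𝒞 p.1.1 p.1.2 p.2) (hWstar : Measurable Wstar)
    (i : Fin N) :
    Measurable fun p : (ℝ × P) × (Fin N → E) × E => collisionGap 𝒞 Wstar i p.2 p.1 := by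
  have hpartner : Measurable fun p : (ℝ × P) × (Fin N → E) × E => p.2.1 (jIdx N p.1.1) :=
    measurable_apply_index (by fun_prop) (by fun_prop)
  have hcoll {x y : (ℝ × P) × (Fin N → E) × E → E} (hx : Measurable x) (hy : Measurable y) :
      Measurable fun p => 𝒞 (x p) (y p) p.1.2 :=
    h𝒞.comp ((hx.prodMk hy).prodMk (by fun_prop))
  exact (hcoll (by fun_prop) hpartner).sub (hcoll (by fun_prop) (by fun_prop))

lemma lintegral_enorm_collisionGap_le {b : Measure P} [IsProbabilityMeasure b] {K : ℝ}
    (hLip : ∀ᵐ θ ∂b, ∀ v vs w ws, ‖𝒞 v vs θ - 𝒞 w ws θ‖ ≤ K * (‖v - w‖ + ‖vs - ws‖))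
    (hWstar : Measurable Wstar) {f : Measure E} (hf : Integrable (fun x => ‖x‖) f)
    {v : Fin N → E} (hopt : IsOptimalPartner f v fun a => Wstar (v, a)) (i : Fin N) (w : E) :
    ∫⁻ q, ‖collisionGap 𝒞 Wstar i (v, w) q‖ₑ ∂(unifIco N).prod b ≤
      ENNReal.ofReal (K * (‖v i - w‖ + W1 (empMeas v) f)) := by
  have hW : Measurable fun a => Wstar (v, a) := by fun_prop
  have hW1 : 0 ≤ W1 (empMeas v) f := W1_nonneg _ _
  calc ∫⁻ q, ‖collisionGap 𝒞 Wstar i (v, w) q‖ₑ ∂(unifIco N).prod b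
      ≤ ENNReal.ofReal K * ∫⁻ a, (‖v i - w‖ₑ + ‖v (jIdx N a) - Wstar (v, a)‖ₑ) ∂unifIco N :=
        lintegral_enorm_collision_sub_le hLip (v i) w
          ((measurable_of_finite v).comp measurable_jIdx) hW
    _ = ENNReal.ofReal K * (‖v i - w‖ₑ + ENNReal.ofReal (W1 (empMeas v) f)) := by
        rw [lintegral_add_left measurable_const, lintegral_const, measure_univ, mul_one,
          hopt.lintegral_enorm_sub hW hf]
    _ = ENNReal.ofReal (K * (‖v i - w‖ + W1 (empMeas v) f)) := by
        rw [← ofReal_norm, ← ENNReal.ofReal_add (norm_nonneg _) hW1,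
          ← ENNReal.ofReal_mul' (add_nonneg (norm_nonneg _) hW1)]

end Collision

section Law

variable {Ω X Y : Type*} [MeasurableSpace Ω] [MeasurableSpace X] [MeasurableSpace Y]
  {μ : Measure Ω}

lemma lintegral_comp_prodMk_of_indepFun [IsFiniteMeasure μ] {ρ : Measure X}
    {A : Ω → X} {Z : Ω → Y} (hA : HasLaw A ρ μ) (hZ : AEMeasurable Z μ) (hind : IndepFun A Z μ)
    {G : X × Y → ℝ≥0∞} (hG : Measurable G) :
    ∫⁻ ω, G (A ω, Z ω) ∂μ = ∫⁻ ω, ∫⁻ x, G (x, Z ω) ∂ρ ∂μ := by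
  have := hA.isFiniteMeasure_iff.1 ‹_›
  have hlaw : HasLaw (fun ω => (A ω, Z ω)) (ρ.prod (μ.map Z)) μ := hind.hasLaw_prod hA ⟨hZ, rfl⟩
  rw [hlaw.lintegral_comp hG.aemeasurable, lintegral_prod_symm _ hG.aemeasurable,
    lintegral_map' hG.lintegral_prod_left'.aemeasurable hZ]

lemma hasLaw_eval_of_map_eq_pi {ι : Type*} [Fintype ι] {ρ : Measure X} [IsProbabilityMeasure ρ]
    {U : ι → Ω → X} (hU : ∀ i, Measurable (U i))
    (hlaw : μ.map (fun ω i => U i ω) = Measure.pi fun _ => ρ) (i : ι) : HasLaw (U i) ρ μ :=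
  (measurePreserving_eval (fun _ => ρ) i).fun_comp_hasLaw
    ⟨(measurable_pi_iff.2 hU).aemeasurable, hlaw⟩

lemma integral_norm_le_of_lintegral_enorm_le {F : Type*} [SeminormedAddCommGroup F] {D : Ω → F}
    {g : Ω → ℝ} (hg : Integrable g μ) (hg₀ : 0 ≤ g)
    (h : ∫⁻ ω, ‖D ω‖ₑ ∂μ ≤ ∫⁻ ω, ENNReal.ofReal (g ω) ∂μ) :
    ∫ ω, ‖D ω‖ ∂μ ≤ ∫ ω, g ω ∂μ := by
  rw [← ofReal_integral_eq_lintegral_ofReal hg (ae_of_all _ hg₀)] at h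
  calc ∫ ω, ‖D ω‖ ∂μ
      ≤ ‖∫ ω, ‖D ω‖ ∂μ‖ := le_abs_self _
    _ ≤ (∫⁻ ω, ENNReal.ofReal ‖‖D ω‖‖ ∂μ).toReal := norm_integral_le_lintegral_norm _
    _ = (∫⁻ ω, ‖D ω‖ₑ ∂μ).toReal := by simp only [norm_norm, ofReal_norm]
    _ ≤ ∫ ω, g ω ∂μ := ENNReal.toReal_le_of_le_ofReal (integral_nonneg hg₀) h

end Law

section TRMC

variable {E P Ω : Type*} [NormedAddCommGroup E] [NormedSpace ℝ E]

/-- The TRMC update `(1 - τ¹) v + τ¹ (1 - τ²) c + τ¹ τ² M` of a particle of velocity `v`, where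
`s = τ¹`, `t = τ²`, `c` is the post-collisional velocity and `M` the thermalised velocity. -/
def trmcUpdate (s t : ℝ) (v c M : E) : E :=
  (1 - s) • v + (s * (1 - t)) • c + (s * t) • M

lemma trmcUpdate_sub_trmcUpdate (s t : ℝ) (v w c c' M : E) :
    trmcUpdate s t v c M - trmcUpdate s t w c' M =
      (1 - s) • (v - w) + (s * (1 - t)) • (c - c') := by
  simp only [trmcUpdate]
  module

/-- The difference of the TRMC updates of `v i` and of the particle `w` coupled to it, as a function
of the state `z = (v, w)` and of `u = (τ¹, τ², α, θ)`. The shared thermalised velocity has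
cancelled, see `trmcUpdate_sub_trmcUpdate`. -/
def trmcGap {N : ℕ} [NeZero N] (𝒞 : E → E → P → E) (Wstar : (Fin N → E) × ℝ → E) (i : Fin N)
    (z : (Fin N → E) × E) (u : ℝ × ℝ × ℝ × P) : E :=
  (1 - u.1) • (z.1 i - z.2) + (u.1 * (1 - u.2.1)) • collisionGap 𝒞 Wstar i z u.2.2

variable [MeasurableSpace E] [BorelSpace E] [SecondCountableTopology E] [MeasurableSpace P]
  [MeasurableSpace Ω] {μ : Measure Ω} {N : ℕ} [NeZero N] {b : Measure P} [IsProbabilityMeasure b]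
  {𝒞 : E → E → P → E} {τ K : ℝ} {f : Measure E} {V : Ω → Fin N → E} {W : Ω → E} {S T α : Ω → ℝ}
  {θ : Ω → P} {Wstar : (Fin N → E) × ℝ → E}

lemma measurable_trmcGap (h𝒞 : Measurable fun p : (E × E) × P => 𝒞 p.1.1 p.1.2 p.2)
    (hWstar : Measurable Wstar) (i : Fin N) :
    Measurable fun p : (ℝ × ℝ × ℝ × P) × (Fin N → E) × E => trmcGap 𝒞 Wstar i p.2 p.1 := by
  have hgap : Measurable fun p : (ℝ × ℝ × ℝ × P) × (Fin N → E) × E =>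
      collisionGap 𝒞 Wstar i p.2 p.1.2.2 :=
    (measurable_collisionGap h𝒞 hWstar i).comp
      ((by fun_prop : Measurable fun p : (ℝ × ℝ × ℝ × P) × (Fin N → E) × E => p.1.2.2).prodMk
        measurable_snd)
  unfold trmcGap
  fun_prop

lemma lintegral_enorm_trmcGap_le
    (h𝒞 : Measurable fun p : (E × E) × P => 𝒞 p.1.1 p.1.2 p.2) (hK : 0 ≤ K)
    (hLip : ∀ᵐ θ ∂b, ∀ v vs w ws, ‖𝒞 v vs θ - 𝒞 w ws θ‖ ≤ K * (‖v - w‖ + ‖vs - ws‖))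
    (hτ : τ ∈ Icc 0 1) (hf : Integrable (fun x => ‖x‖) f) (hWstar : Measurable Wstar)
    {v : Fin N → E} (hopt : IsOptimalPartner f v fun a => Wstar (v, a)) (i : Fin N) (w : E) :
    ∫⁻ u, ‖trmcGap 𝒞 Wstar i (v, w) u‖ₑ ∂(bern τ).prod ((bern τ).prod ((unifIco N).prod b)) ≤
      ENNReal.ofReal
        ((1 - τ) * ‖v i - w‖ + τ * (1 - τ) * K * (‖v i - w‖ + W1 (empMeas v) f)) := by
  have hτ₀ : 0 ≤ τ := hτ.1
  have hτ₁ : 0 ≤ 1 - τ := sub_nonneg.2 hτ.2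
  have hW1 : 0 ≤ W1 (empMeas v) f := W1_nonneg _ _
  calc ∫⁻ u, ‖trmcGap 𝒞 Wstar i (v, w) u‖ₑ ∂(bern τ).prod ((bern τ).prod ((unifIco N).prod b))
      = ENNReal.ofReal (1 - τ) * ‖v i - w‖ₑ + ENNReal.ofReal τ * (ENNReal.ofReal (1 - τ) *
          ∫⁻ q, ‖collisionGap 𝒞 Wstar i (v, w) q‖ₑ ∂(unifIco N).prod b) :=
        lintegral_enorm_bern_mixture hτ _
          ((measurable_collisionGap h𝒞 hWstar i).comp measurable_prodMk_right)
    _ ≤ ENNReal.ofReal (1 - τ) * ENNReal.ofReal ‖v i - w‖ + ENNReal.ofReal τ *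
          (ENNReal.ofReal (1 - τ) * ENNReal.ofReal (K * (‖v i - w‖ + W1 (empMeas v) f))) := by
        gcongr
        · exact (ofReal_norm _).ge
        · exact lintegral_enorm_collisionGap_le hLip hWstar hf hopt i w
    _ = _ := by
        rw [← ENNReal.ofReal_mul hτ₁, ← ENNReal.ofReal_mul hτ₁, ← ENNReal.ofReal_mul hτ₀,
          ← ENNReal.ofReal_add (by positivity) (by positivity)]
        simp only [mul_assoc]

lemma integral_norm_trmcGap_le
    (h𝒞 : Measurable fun p : (E × E) × P => 𝒞 p.1.1 p.1.2 p.2) (hK : 0 ≤ K)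
    (hLip : ∀ᵐ θ ∂b, ∀ v vs w ws, ‖𝒞 v vs θ - 𝒞 w ws θ‖ ≤ K * (‖v - w‖ + ‖vs - ws‖))
    (hτ : τ ∈ Icc 0 1) (hf : Integrable (fun x => ‖x‖) f)
    (hV : AEMeasurable V μ) (hW : AEMeasurable W μ) (hWstar : Measurable Wstar)
    {A : Ω → ℝ × ℝ × ℝ × P} (hlaw : HasLaw A ((bern τ).prod ((bern τ).prod ((unifIco N).prod b))) μ)
    (hind : IndepFun A (fun ω => (V ω, W ω)) μ)
    (hopt : ∀ v, IsOptimalPartner f v fun a => Wstar (v, a)) (i : Fin N)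
    (hVW : Integrable (fun ω => ‖V ω i - W ω‖) μ)
    (hW1 : Integrable (fun ω => W1 (empMeas (V ω)) f) μ) :
    ∫ ω, ‖trmcGap 𝒞 Wstar i (V ω, W ω) (A ω)‖ ∂μ ≤
      (1 - τ) * ∫ ω, ‖V ω i - W ω‖ ∂μ +
        τ * (1 - τ) * K * (∫ ω, ‖V ω i - W ω‖ ∂μ + ∫ ω, W1 (empMeas (V ω)) f ∂μ) := by
  have hτ₀ : 0 ≤ τ := hτ.1
  have hτ₁ : 0 ≤ 1 - τ := sub_nonneg.2 hτ.2
  have := isProbabilityMeasure_bern hτ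
  have := hlaw.isProbabilityMeasure
  let g (ω : Ω) : ℝ :=
    (1 - τ) * ‖V ω i - W ω‖ + τ * (1 - τ) * K * (‖V ω i - W ω‖ + W1 (empMeas (V ω)) f)
  have hsum : Integrable (fun ω => ‖V ω i - W ω‖ + W1 (empMeas (V ω)) f) μ := hVW.add hW1
  have hg : Integrable g μ := (hVW.const_mul _).add (hsum.const_mul _)
  have hg₀ : 0 ≤ g := fun ω => by
    have : 0 ≤ W1 (empMeas (V ω)) f := W1_nonneg _ _
    simp only [g, Pi.zero_apply]
    positivity
  have hgap : ∫⁻ ω, ‖trmcGap 𝒞 Wstar i (V ω, W ω) (A ω)‖ₑ ∂μ ≤ ∫⁻ ω, ENNReal.ofReal (g ω) ∂μ :=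
    (lintegral_comp_prodMk_of_indepFun hlaw (hV.prodMk hW) hind
      (measurable_trmcGap h𝒞 hWstar i).enorm).trans_le <| lintegral_mono fun ω =>
        lintegral_enorm_trmcGap_le h𝒞 hK hLip hτ hf hWstar (hopt _) i (W ω)
  calc ∫ ω, ‖trmcGap 𝒞 Wstar i (V ω, W ω) (A ω)‖ ∂μ
      ≤ ∫ ω, g ω ∂μ := integral_norm_le_of_lintegral_enorm_le hg hg₀ hgap
    _ = _ := by
      rw [← integral_add hVW hW1, ← integral_const_mul, ← integral_const_mul,
        ← integral_add (hVW.const_mul _) (hsum.const_mul _)]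

theorem trmc_one_step_coupling_general
    (h𝒞 : Measurable fun p : (E × E) × P => 𝒞 p.1.1 p.1.2 p.2) (hK : 0 ≤ K)
    (hLip : ∀ᵐ θ ∂b, ∀ v vs w ws, ‖𝒞 v vs θ - 𝒞 w ws θ‖ ≤ K * (‖v - w‖ + ‖vs - ws‖))
    (hτ : τ ∈ Icc 0 1) (hf : Integrable (fun x => ‖x‖) f)
    (hV : AEMeasurable V μ) (hW : AEMeasurable W μ) (hWstar : Measurable Wstar)
    (hlaw : HasLaw (fun ω => (S ω, T ω, α ω, θ ω))
      ((bern τ).prod ((bern τ).prod ((unifIco N).prod b))) μ)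
    (hind : IndepFun (fun ω => (S ω, T ω, α ω, θ ω)) (fun ω => (V ω, W ω)) μ)
    (hopt : ∀ v, IsOptimalPartner f v fun a => Wstar (v, a)) (M : Ω → E) (i : Fin N)
    (hVW : Integrable (fun ω => ‖V ω i - W ω‖) μ)
    (hW1 : Integrable (fun ω => W1 (empMeas (V ω)) f) μ) :
    ∫ ω, ‖trmcUpdate (S ω) (T ω) (V ω i) (𝒞 (V ω i) (V ω (jIdx N (α ω))) (θ ω)) (M ω) -
        trmcUpdate (S ω) (T ω) (W ω) (𝒞 (W ω) (Wstar (V ω, α ω)) (θ ω)) (M ω)‖ ∂μ ≤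
      (1 + τ * K) * ∫ ω, ‖V ω i - W ω‖ ∂μ +
        τ * (1 - τ) * K * ∫ ω, W1 (empMeas (V ω)) f ∂μ := by
  have hgap := integral_norm_trmcGap_le h𝒞 hK hLip hτ hf hV hW hWstar hlaw hind hopt i hVW hW1
  have hτ₀ : 0 ≤ τ := hτ.1
  have hA : 0 ≤ ∫ ω, ‖V ω i - W ω‖ ∂μ := integral_nonneg fun _ => norm_nonneg _
  have hτA : 0 ≤ τ * ∫ ω, ‖V ω i - W ω‖ ∂μ := mul_nonneg hτ₀ hA
  have hτKA : 0 ≤ τ * τ * K * ∫ ω, ‖V ω i - W ω‖ ∂μ :=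
    mul_nonneg (mul_nonneg (mul_nonneg hτ₀ hτ₀) hK) hA
  simp only [trmcUpdate_sub_trmcUpdate]
  exact hgap.trans (by linarith)

lemma hasLaw_auxiliaries_of_map_eq_pi {ι X : Type*} [Fintype ι] [MeasurableSpace X] {ρ : Measure X}
    [IsProbabilityMeasure ρ] {U : ι → Ω → ℝ × ℝ × ℝ × P × X} (hτ : τ ∈ Icc 0 1)
    (hU : ∀ i, Measurable (U i))
    (hlaw : μ.map (fun ω i => U i ω) =
      Measure.pi fun _ => (bern τ).prod ((bern τ).prod ((unifIco N).prod (b.prod ρ)))) (i : ι) :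
    HasLaw (fun ω => ((U i ω).1, (U i ω).2.1, (U i ω).2.2.1, (U i ω).2.2.2.1))
      ((bern τ).prod ((bern τ).prod ((unifIco N).prod b))) μ := by
  have := isProbabilityMeasure_bern hτ
  exact ((MeasurePreserving.id _).prod ((MeasurePreserving.id _).prod
    ((MeasurePreserving.id _).prod measurePreserving_fst))).fun_comp_hasLaw
    (hasLaw_eval_of_map_eq_pi hU hlaw i)

end TRMC

/-- one-step coupling estimate for the TRMC scheme. -/
theorem trmc_one_step_coupling (Lc Mb : ℝ) (hLc : 0 < Lc) (hMb : 0 ≤ Mb) :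
    ∃ C₁ > (0:ℝ), ∃ C₂ > (0:ℝ),
      ∀ (d m N : ℕ) [NeZero N]
        (b : Measure (Vec m)), IsProbabilityMeasure b →
        (∀ᵐ θ ∂b, ‖θ‖ ≤ Mb) →
      ∀ (𝒞 : Vec d → Vec d → Vec m → Vec d),
        Measurable (fun p : (Vec d × Vec d) × Vec m => 𝒞 p.1.1 p.1.2 p.2) →
        (∀ v vs w ws θ,
          ‖𝒞 v vs θ - 𝒞 w ws θ‖ ≤ Lc * (1 + ‖θ‖) * (‖v - w‖ + ‖vs - ws‖)) →
      ∀ (τ : ℝ), τ ∈ Set.Ioo (0:ℝ) 1 →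
      ∀ (fn finf : Measure (Vec d)),
        IsProbabilityMeasure fn → IsProbabilityMeasure finf →
        Integrable (fun v : Vec d => ‖v‖) fn →
        Integrable (fun v : Vec d => ‖v‖) finf →
      ∀ (Ω : Type) [MeasureSpace Ω] [IsProbabilityMeasure (ℙ : Measure Ω)]
        (V W : Fin N → Ω → Vec d)
        (U : Fin N → Ω → ℝ × ℝ × ℝ × Vec m × Vec d)
        (Wstar : (Fin N → Vec d) × ℝ → Vec d),
        (∀ i, Measurable (V i)) → (∀ i, Measurable (W i)) →
        (∀ i, Measurable (U i)) → Measurable Wstar →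
        -- the auxiliary variables (τ^{i,1}, τ^{i,2}, α^i, θ^i, M^i) are mutually
        -- independent with the prescribed laws, and independent of (V_n, W_n):
        (Measure.map (fun ω => fun i : Fin N => U i ω) ℙ
          = Measure.pi fun _ : Fin N =>
              (bern τ).prod ((bern τ).prod ((unifIco N).prod (b.prod finf)))) →
        IndepFun (fun ω => fun i : Fin N => U i ω)
          (fun ω => fun i : Fin N => (V i ω, W i ω)) ℙ →
        -- W*_{f_n} is the map from the coupling lemma:
        (∀ v : Fin N → Vec d,
          (Measure.map (fun α : ℝ => (Wstar (v, α), v (jIdx N α))) (unifIco N)).map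
              Prod.fst = fn ∧
          (Measure.map (fun α : ℝ => (Wstar (v, α), v (jIdx N α))) (unifIco N)).map
              Prod.snd = empMeas v ∧
          (∫ p, ‖p.1 - p.2‖
              ∂(Measure.map (fun α : ℝ => (Wstar (v, α), v (jIdx N α))) (unifIco N)))
            = W1 fn (empMeas v)) →
        -- finite first moments of the coupled systems:
        (∀ i, Integrable (fun ω => ‖V i ω - W i ω‖) ℙ) →
        Integrable (fun ω => W1 (empMeas fun j => V j ω) fn) ℙ →
      ∀ i : Fin N,
        (∫ ω, ‖((1 - (U i ω).1) • V i ω +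
                  ((U i ω).1 * (1 - (U i ω).2.1)) •
                    𝒞 (V i ω) (V (jIdx N (U i ω).2.2.1) ω) (U i ω).2.2.2.1 +
                  ((U i ω).1 * (U i ω).2.1) • (U i ω).2.2.2.2) -
                ((1 - (U i ω).1) • W i ω +
                  ((U i ω).1 * (1 - (U i ω).2.1)) •
                    𝒞 (W i ω) (Wstar (fun j => V j ω, (U i ω).2.2.1))
                      (U i ω).2.2.2.1 +
                  ((U i ω).1 * (U i ω).2.1) • (U i ω).2.2.2.2)‖ ∂ℙ)
          ≤ (1 + τ * C₁) * (∫ ω, ‖V i ω - W i ω‖ ∂ℙ) +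
            τ * (1 - τ) * C₂ * ∫ ω, W1 (empMeas fun j => V j ω) fn ∂ℙ := by
  refine ⟨Lc * (1 + Mb), by positivity, Lc * (1 + Mb), by positivity, ?_⟩
  intro d m N _ b _ hbM 𝒞 h𝒞 hLip τ hτ fn finf _ _ hfn _ Ω _ _ V W U Wstar hV hW hU hWstar
    hlaw hind hopt hVW hW1 i
  have hτ' : τ ∈ Icc 0 1 := Ioo_subset_Icc_self hτ
  have hLip' := ae_lipschitz_of_ae_norm_le hLc.le hbM hLip
  have hind' := hind.comp (φ := fun u => ((u i).1, (u i).2.1, (u i).2.2.1, (u i).2.2.2.1))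
    (ψ := fun z => (fun j => (z j).1, (z i).2)) (by fun_prop) (by fun_prop)
  exact trmc_one_step_coupling_general h𝒞 (by positivity) hLip' hτ' hfn
    (measurable_pi_iff.2 hV).aemeasurable (hW i).aemeasurable hWstar
    (hasLaw_auxiliaries_of_map_eq_pi hτ' hU hlaw i) hind' hopt (fun ω => (U i ω).2.2.2.2) i
    (hVW i) hW1

end
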